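/- arXiv:2005.00772 — 2 statements merged into one kernel-verified Lean document; each statement's English description precedes it below -/
import Mathlib

section
/- Let n be a natural number and let a, c be real numbers such that (c−1)_{n+1} ≠ 0. Then ∑_{k=0}^{n} (−1)^k · binom(n,k) · (a)_k (a)_{n−k} / ((c)_k (c−1)_{n−k}) equals (n!/(c−1)_{n+1}) · [(a)_{⌊n/2⌋} (c−a)_{⌊n/2⌋} / ((1)_{⌊n/2⌋} (c)_{⌊n/2⌋})] multiplied by (c + (n−2)/2) when n is even, and by (a + (n−1)/2) when n is odd. -/
/-- Real Pochhammer symbol: `(x)_0 = 1`, `(x)_n = x(x+1)⋯(x+n-1)`. -/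
def poch (x : ℝ) (n : ℕ) : ℝ := ∏ i ∈ Finset.range n, (x + i)

/-!
Let `θ = x d/dx`, `F = ₁F₁(a; c; x)` and `G = F(-x)`. The sum is `n!` times the coefficient of `xⁿ`
in `G · ₁F₁(a; c-1; x)`, and `(c - 1) ₁F₁(a; c-1; x) = (θ + c - 1) F`, so it is determined by the
coefficients of `F G` and of `W = F θG - θF G`. Kummer's equation for `F` and `G` makes each of
these two series determine the other, up to a shift by one degree. As `F G` is even and `W` is odd,
this gives a two-term recurrence for the even coefficients of `F G`, which is solved by a product of
Pochhammer symbols.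

Since `c` may be a non-positive integer, Kummer's equation is only available modulo a power of `x`.
-/

open PowerSeries
open scoped Nat

local notation:max "⦅" x "⦆_" n:max => Polynomial.eval x (ascPochhammer _ n)

section Derivation

variable {R A : Type*} [CommRing R] [CommRing A] [Algebra R A] (θ : Derivation R A A)

/-- The Wronskian `f θ(g) - θ(f) g` with respect to a derivation `θ`. -/
def derivationWronskian (f g : A) : A := f * θ g - θ f * g

/-- Kummer's operator `θ (θ + c - 1) - x (θ + a)`, for a derivation `θ` playing the role of
`x d/dx`. It kills `₁F₁(a; c; x)` unless `c` is a non-positive integer, and the operator with `-x`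
in place of `x` then kills `₁F₁(a; c; -x)`. -/
def kummerOperator (x a c f : A) : A := θ (θ f) + (c - 1) * θ f - x * (θ f + a * f)

variable (x a c f g : A)

lemma derivation_derivationWronskian_add :
    θ (derivationWronskian θ f g) + (c - 1) * derivationWronskian θ f g
        + x * (θ (f * g) + 2 * a * (f * g))
      = f * kummerOperator θ (-x) a c g - kummerOperator θ x a c f * g := by
  simp only [derivationWronskian, kummerOperator, map_sub, Derivation.leibniz, smul_eq_mul]
  ring

lemma derivation_derivation_mul_add :
    θ (θ (f * g)) + (c - 1) * θ (f * g) + x * derivationWronskian θ f g - 2 * (θ f * θ g)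
      = f * kummerOperator θ (-x) a c g + kummerOperator θ x a c f * g := by
  simp only [derivationWronskian, kummerOperator, map_add, Derivation.leibniz, smul_eq_mul]
  ring

lemma derivation_mul_derivation_add :
    θ (θ f * θ g) + 2 * (c - 1) * (θ f * θ g) - x * (a * derivationWronskian θ f g)
      = θ f * kummerOperator θ (-x) a c g + kummerOperator θ x a c f * θ g := by
  simp only [derivationWronskian, kummerOperator, Derivation.leibniz, smul_eq_mul]
  ring

end Derivation

section EulerDerivation

variable (R : Type*) [CommRing R]

/-- The Euler derivation `x d/dx` on formal power series. -/
noncomputable def eulerDerivation : Derivation R R⟦X⟧ R⟦X⟧ := (X : R⟦X⟧) • derivative R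

variable {R}

lemma coeff_eulerDerivation (n : ℕ) (f : R⟦X⟧) :
    coeff n (eulerDerivation R f) = n * coeff n f := by
  rw [eulerDerivation, Derivation.smul_apply, smul_eq_mul]
  cases n with
  | zero => simp
  | succ n =>
    rw [coeff_succ_X_mul, coeff_derivative]
    push_cast
    ring

lemma rescale_eulerDerivation (r : R) (f : R⟦X⟧) :
    rescale r (eulerDerivation R f) = eulerDerivation R (rescale r f) := by
  ext n
  simp only [coeff_rescale, coeff_eulerDerivation]
  ring

lemma X_pow_dvd_rescale {n : ℕ} {f : R⟦X⟧} (h : X ^ n ∣ f) (r : R) : X ^ n ∣ rescale r f := by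
  simp only [X_pow_dvd_iff, coeff_rescale] at h ⊢
  intro m hm
  rw [h m hm, mul_zero]

lemma rescale_neg_one_kummerOperator (a c : R) (f : R⟦X⟧) :
    rescale (-1) (kummerOperator (eulerDerivation R) X (C a) (C c) f)
      = kummerOperator (eulerDerivation R) (-X) (C a) (C c) (rescale (-1) f) := by
  have rescale_C (r : R) : rescale (-1) (C r) = C r := by
    ext n
    cases n <;> simp [coeff_rescale, coeff_C]
  simp only [kummerOperator, map_sub, map_add, map_mul, map_one, rescale_neg_one_X,
    rescale_eulerDerivation, rescale_C]

variable {a c : R} {f g : R⟦X⟧} {m : ℕ}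

lemma add_mul_coeff_succ_derivationWronskian
    (hf : X ^ (m + 2) ∣ kummerOperator (eulerDerivation R) X (C a) (C c) f)
    (hg : X ^ (m + 2) ∣ kummerOperator (eulerDerivation R) (-X) (C a) (C c) g) :
    (m + c) * coeff (m + 1) (derivationWronskian (eulerDerivation R) f g)
      = -((m + 2 * a) * coeff m (f * g)) := by
  have h := X_pow_dvd_iff.1 ((hg.mul_left f).sub (hf.mul_right g)) (m + 1) (by omega)
  rw [← derivation_derivationWronskian_add] at h
  simp only [map_add, sub_mul, one_mul, map_sub, coeff_succ_X_mul, coeff_C_mul,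
    coeff_eulerDerivation, two_mul, add_mul] at h
  push_cast at h
  linear_combination h

lemma mul_coeff_succ_mul
    (hf : X ^ (m + 2) ∣ kummerOperator (eulerDerivation R) X (C a) (C c) f)
    (hg : X ^ (m + 2) ∣ kummerOperator (eulerDerivation R) (-X) (C a) (C c) g) :
    (m + 2 * c - 1) * ((m + 1) * (m + c) * coeff (m + 1) (f * g))
      = (2 * a - (m + 2 * c - 1)) * coeff m (derivationWronskian (eulerDerivation R) f g) := by
  set θ := eulerDerivation R
  have h_mul : (m + 1) * (m + c) * coeff (m + 1) (f * g)
      = 2 * coeff (m + 1) (θ f * θ g) - coeff m (derivationWronskian θ f g) := by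
    have h := X_pow_dvd_iff.1 ((hg.mul_left f).add (hf.mul_right g)) (m + 1) (by omega)
    rw [← derivation_derivation_mul_add] at h
    simp only [map_add, sub_mul, one_mul, map_sub, coeff_succ_X_mul, coeff_C_mul, θ,
      coeff_eulerDerivation, two_mul] at h ⊢
    push_cast at h
    linear_combination h
  have h_derivs : (m + 2 * c - 1) * coeff (m + 1) (θ f * θ g)
      = a * coeff m (derivationWronskian θ f g) := by
    have h := X_pow_dvd_iff.1 ((hg.mul_left (θ f)).add (hf.mul_right (θ g))) (m + 1) (by omega)
    rw [← derivation_mul_derivation_add] at h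
    simp only [map_add, sub_mul, one_mul, map_sub, coeff_succ_X_mul, coeff_C_mul, θ,
      coeff_eulerDerivation, two_mul, add_mul] at h ⊢
    push_cast at h
    linear_combination h
  linear_combination (m + 2 * c - 1) * h_mul + 2 * h_derivs

variable [IsAddTorsionFree R]

lemma coeff_mul_rescale_neg_one_of_odd {n : ℕ} (hn : Odd n) (f : R⟦X⟧) :
    coeff n (f * rescale (-1) f) = 0 := by
  have h_even : rescale (-1) (f * rescale (-1) f) = f * rescale (-1) f := by
    simp [rescale_rescale, mul_comm]
  have h := congrArg (coeff n) h_even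
  rwa [coeff_rescale, hn.neg_one_pow, neg_one_mul, neg_eq_self] at h

lemma coeff_derivationWronskian_rescale_neg_one_of_even {n : ℕ} (hn : Even n) (f : R⟦X⟧) :
    coeff n (derivationWronskian (eulerDerivation R) f (rescale (-1) f)) = 0 := by
  set W := derivationWronskian (eulerDerivation R) f (rescale (-1) f) with hW
  have h_odd : rescale (-1) W = -W := by
    simp [hW, derivationWronskian, rescale_eulerDerivation, rescale_rescale, mul_comm]
  have h := congrArg (coeff n) h_odd
  rwa [coeff_rescale, hn.neg_one_pow, one_mul, map_neg, self_eq_neg] at h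

end EulerDerivation

section AscPochhammer

variable {R : Type*} [CommRing R]

lemma ascPochhammer_succ_eval_sub_one (x : R) (n : ℕ) :
    ⦅x - 1⦆_(n + 1) = (x - 1) * ⦅x⦆_n := by
  simp [ascPochhammer_succ_left, Polynomial.eval_comp]

variable {x : R} {m n : ℕ}

lemma ascPochhammer_eval_ne_zero_of_le (h : ⦅x⦆_n ≠ 0) (hmn : m ≤ n) : ⦅x⦆_m ≠ 0 := by
  obtain ⟨k, rfl⟩ := Nat.exists_eq_add_of_le hmn
  rw [← ascPochhammer_mul, Polynomial.eval_mul] at h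
  exact left_ne_zero_of_mul h

lemma add_natCast_ne_zero_of_ascPochhammer_eval (h : ⦅x⦆_n ≠ 0) (hmn : m < n) :
    x + m ≠ 0 := by
  have h_succ := ascPochhammer_eval_ne_zero_of_le h hmn
  rw [ascPochhammer_succ_eval] at h_succ
  exact right_ne_zero_of_mul h_succ

end AscPochhammer

section KummerSeries

variable {K : Type*} [Field K]

/-- Kummer's series `₁F₁(a; c; x)`. Its coefficient of `xⁿ` is the junk value `0` when
`(c)_n = 0`. -/
noncomputable def kummerSeries (a c : K) : K⟦X⟧ :=
  mk fun n => ⦅a⦆_n / (⦅c⦆_n * n !)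

variable [CharZero K] {a c : K} {m n : ℕ}

lemma sum_choose_mul_ascPochhammer (n : ℕ) (a b c d : K) :
    ∑ k ∈ Finset.range (n + 1),
        (-1) ^ k * n.choose k * (⦅a⦆_k * ⦅b⦆_(n - k)) / (⦅c⦆_k * ⦅d⦆_(n - k))
      = n ! * coeff n (kummerSeries b d * rescale (-1) (kummerSeries a c)) := by
  rw [mul_comm (kummerSeries b d), coeff_mul, Finset.Nat.sum_antidiagonal_eq_sum_range_succ_mk,
    Finset.mul_sum]
  refine Finset.sum_congr rfl fun k hk => ?_
  rw [Nat.cast_choose K (Finset.mem_range_succ_iff.1 hk)]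
  simp only [kummerSeries, coeff_rescale, coeff_mk]
  ring

lemma coeff_succ_kummerSeries (h : ⦅c⦆_(m + 1) ≠ 0) :
    (m + 1) * (c + m) * coeff (m + 1) (kummerSeries a c)
      = (a + m) * coeff m (kummerSeries a c) := by
  have hm := ascPochhammer_eval_ne_zero_of_le h m.le_succ
  have hcm := add_natCast_ne_zero_of_ascPochhammer_eval h m.lt_succ_self
  have h_fact : (m ! : K) ≠ 0 := by exact_mod_cast m.factorial_ne_zero
  have h_succ : (m + 1 : K) ≠ 0 := m.cast_add_one_ne_zero
  simp only [kummerSeries, coeff_mk, ascPochhammer_succ_eval, Nat.factorial_succ]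
  push_cast
  field_simp

lemma X_pow_dvd_kummerOperator_kummerSeries (h : ⦅c⦆_n ≠ 0) :
    X ^ (n + 1) ∣ kummerOperator (eulerDerivation K) X (C a) (C c) (kummerSeries a c) := by
  refine X_pow_dvd_iff.2 fun k hk => ?_
  simp only [kummerOperator, map_add, map_sub, sub_mul, one_mul, coeff_C_mul,
    coeff_eulerDerivation]
  cases k with
  | zero => simp
  | succ k =>
    have h_rec := coeff_succ_kummerSeries (a := a)
      (ascPochhammer_eval_ne_zero_of_le h (Nat.lt_succ_iff.1 hk))
    simp only [coeff_succ_X_mul, map_add, coeff_C_mul, coeff_eulerDerivation]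
    push_cast
    linear_combination h_rec

lemma X_pow_dvd_kummerOperator_rescale_kummerSeries (h : ⦅c⦆_n ≠ 0) :
    X ^ (n + 1) ∣ kummerOperator (eulerDerivation K) (-X) (C a) (C c)
      (rescale (-1) (kummerSeries a c)) := by
  rw [← rescale_neg_one_kummerOperator]
  exact X_pow_dvd_rescale (X_pow_dvd_kummerOperator_kummerSeries h) _

/-- The even series `₁F₁(a; c; x) ₁F₁(a; c; -x)`. -/
noncomputable def kummerProduct (a c : K) : K⟦X⟧ :=
  kummerSeries a c * rescale (-1) (kummerSeries a c)

/-- The Wronskian of `₁F₁(a; c; x)` and `₁F₁(a; c; -x)` with respect to `x d/dx`. -/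
noncomputable def kummerWronskian (a c : K) : K⟦X⟧ :=
  derivationWronskian (eulerDerivation K) (kummerSeries a c) (rescale (-1) (kummerSeries a c))

lemma coeff_succ_kummerWronskian (h : ⦅c⦆_(m + 1) ≠ 0) :
    (c + m) * coeff (m + 1) (kummerWronskian a c)
      = -((m + 2 * a) * coeff m (kummerProduct a c)) := by
  rw [add_comm c]
  exact add_mul_coeff_succ_derivationWronskian (X_pow_dvd_kummerOperator_kummerSeries h)
    (X_pow_dvd_kummerOperator_rescale_kummerSeries h)

lemma coeff_succ_kummerProduct (h : ⦅c⦆_(m + 1) ≠ 0) :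
    (m + 2 * c - 1) * ((m + 1) * (m + c) * coeff (m + 1) (kummerProduct a c))
      = (2 * a - (m + 2 * c - 1)) * coeff m (kummerWronskian a c) :=
  mul_coeff_succ_mul (X_pow_dvd_kummerOperator_kummerSeries h)
    (X_pow_dvd_kummerOperator_rescale_kummerSeries h)

lemma coeff_two_mul_add_two_kummerProduct (h : ⦅c⦆_(2 * m + 2) ≠ 0) :
    (1 + m) * (c + m) * ((c + (2 * m : ℕ)) * (c + (2 * m + 1 : ℕ)))
        * coeff (2 * m + 2) (kummerProduct a c)
      = (a + m) * (c - a + m) * coeff (2 * m) (kummerProduct a c) := by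
  have h_wronskian := coeff_succ_kummerWronskian (a := a)
    (ascPochhammer_eval_ne_zero_of_le h (Nat.le_succ _))
  have h_product := coeff_succ_kummerProduct (a := a) h
  push_cast at h_wronskian h_product ⊢
  linear_combination (c + 2 * m) / 4 * h_product - (c - a + m) / 2 * h_wronskian

lemma coeff_two_mul_kummerProduct (h : ⦅c⦆_(2 * m) ≠ 0) :
    coeff (2 * m) (kummerProduct a c)
      = ⦅a⦆_m * ⦅c - a⦆_m / (⦅1⦆_m * ⦅c⦆_m * ⦅c⦆_(2 * m)) := by
  induction m with
  | zero =>
    simp [kummerProduct, kummerSeries, coeff_mul, coeff_rescale, -coeff_zero_eq_constantCoeff]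
  | succ m ih =>
    have ih := ih (ascPochhammer_eval_ne_zero_of_le h (by omega))
    have h_one : (1 + m : K) ≠ 0 := add_comm (m : K) 1 ▸ m.cast_add_one_ne_zero
    have hm := add_natCast_ne_zero_of_ascPochhammer_eval (m := m) h (by omega)
    have h_even := add_natCast_ne_zero_of_ascPochhammer_eval (m := 2 * m) h (by omega)
    have h_odd := add_natCast_ne_zero_of_ascPochhammer_eval (m := 2 * m + 1) h (by omega)
    have h_rec := coeff_two_mul_add_two_kummerProduct (a := a) h
    have h_ne : (1 + m) * (c + m) * ((c + (2 * m : ℕ)) * (c + (2 * m + 1 : ℕ))) ≠ 0 :=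
      mul_ne_zero (mul_ne_zero h_one hm) (mul_ne_zero h_even h_odd)
    rw [ih] at h_rec
    rw [mul_add_one, eq_div_of_mul_eq h_ne ((mul_comm _ _).trans h_rec)]
    simp only [ascPochhammer_succ_eval]
    field_simp

lemma sub_one_mul_coeff_kummerSeries_sub_one (h : ⦅c - 1⦆_(m + 1) ≠ 0) :
    (c - 1) * coeff m (kummerSeries a (c - 1)) = (c - 1 + m) * coeff m (kummerSeries a c) := by
  have h_shift := ascPochhammer_succ_eval_sub_one c m
  have hc : ⦅c⦆_m ≠ 0 := right_ne_zero_of_mul (h_shift ▸ h)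
  have hc' := ascPochhammer_eval_ne_zero_of_le h m.le_succ
  have h_fact : (m ! : K) ≠ 0 := by exact_mod_cast m.factorial_ne_zero
  rw [ascPochhammer_succ_eval] at h_shift
  simp only [kummerSeries, coeff_mk]
  field_simp
  linear_combination -⦅a⦆_m * h_shift

lemma coeff_kummerSeries_sub_one_mul_rescale (h : ⦅c - 1⦆_(n + 1) ≠ 0) :
    (c - 1) * coeff n (kummerSeries a (c - 1) * rescale (-1) (kummerSeries a c))
      = (c - 1 + n / 2) * coeff n (kummerProduct a c) - coeff n (kummerWronskian a c) / 2 := by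
  set θ := eulerDerivation K
  set F := kummerSeries a c
  set G := rescale (-1) F
  have h_contiguous : X ^ (n + 1) ∣ C (c - 1) * kummerSeries a (c - 1) - (C (c - 1) * F + θ F) := by
    refine X_pow_dvd_iff.2 fun k hk => ?_
    have h_shift := sub_one_mul_coeff_kummerSeries_sub_one (a := a)
      (ascPochhammer_eval_ne_zero_of_le h hk)
    simp only [map_sub (coeff k), map_add (coeff k), coeff_C_mul, θ, coeff_eulerDerivation, F]
    linear_combination h_shift
  have h_coeff := X_pow_dvd_iff.1 (h_contiguous.mul_right G) n n.lt_succ_self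
  have h_leibniz : 2 * coeff n (θ F * G)
      = n * coeff n (kummerProduct a c) - coeff n (kummerWronskian a c) := by
    rw [two_mul, ← map_add, ← coeff_eulerDerivation, ← map_sub]
    congr 1
    simp only [kummerProduct, kummerWronskian, derivationWronskian, Derivation.leibniz,
      smul_eq_mul, F, G, θ]
    ring
  rw [sub_mul, add_mul, mul_assoc, mul_assoc, map_sub, map_add, coeff_C_mul, coeff_C_mul] at h_coeff
  simp only [kummerProduct] at h_leibniz ⊢
  linear_combination h_coeff + h_leibniz / 2

lemma coeff_two_mul_kummerSeries_sub_one_mul_rescale (h : ⦅c - 1⦆_(2 * m + 1) ≠ 0) :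
    coeff (2 * m) (kummerSeries a (c - 1) * rescale (-1) (kummerSeries a c))
      = ⦅a⦆_m * ⦅c - a⦆_m / (⦅1⦆_m * ⦅c⦆_m) * (c - 1 + m)
          / ⦅c - 1⦆_(2 * m + 1) := by
  have h_contiguous := coeff_kummerSeries_sub_one_mul_rescale (a := a) h
  have h_wronskian : coeff (2 * m) (kummerWronskian a c) = 0 :=
    coeff_derivationWronskian_rescale_neg_one_of_even (even_two_mul m) _
  rw [ascPochhammer_succ_eval_sub_one] at h ⊢
  obtain ⟨hc, hc'⟩ := mul_ne_zero_iff.1 h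
  rw [h_wronskian, coeff_two_mul_kummerProduct hc', mul_comm] at h_contiguous
  rw [eq_div_of_mul_eq hc h_contiguous]
  push_cast
  field_simp
  ring

lemma coeff_two_mul_add_one_kummerSeries_sub_one_mul_rescale (h : ⦅c - 1⦆_(2 * m + 2) ≠ 0) :
    coeff (2 * m + 1) (kummerSeries a (c - 1) * rescale (-1) (kummerSeries a c))
      = ⦅a⦆_m * ⦅c - a⦆_m / (⦅1⦆_m * ⦅c⦆_m) * (a + m)
          / ⦅c - 1⦆_(2 * m + 2) := by
  have h_contiguous := coeff_kummerSeries_sub_one_mul_rescale (a := a) h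
  have h_product : coeff (2 * m + 1) (kummerProduct a c) = 0 :=
    coeff_mul_rescale_neg_one_of_odd (odd_two_mul_add_one m) _
  rw [ascPochhammer_succ_eval_sub_one] at h ⊢
  obtain ⟨hc, hc'⟩ := mul_ne_zero_iff.1 h
  have h_wronskian := coeff_succ_kummerWronskian (a := a) hc'
  rw [ascPochhammer_succ_eval] at hc' ⊢
  obtain ⟨hc_even, hc_last⟩ := mul_ne_zero_iff.1 hc'
  rw [coeff_two_mul_kummerProduct hc_even, mul_comm] at h_wronskian
  rw [h_product, eq_div_of_mul_eq hc_last h_wronskian, mul_comm] at h_contiguous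
  rw [eq_div_of_mul_eq hc h_contiguous]
  push_cast
  field_simp
  ring

end KummerSeries

theorem stmt_11_general {K : Type*} [Field K] [CharZero K] (n : ℕ) (a c : K)
    (hc : ⦅c - 1⦆_(n + 1) ≠ 0) :
    ∑ k ∈ Finset.range (n + 1),
        (-1) ^ k * n.choose k * (⦅a⦆_k * ⦅a⦆_(n - k)) / (⦅c⦆_k * ⦅c - 1⦆_(n - k))
      = (n ! / ⦅c - 1⦆_(n + 1)) *
          (⦅a⦆_(n / 2) * ⦅c - a⦆_(n / 2) / (⦅1⦆_(n / 2) * ⦅c⦆_(n / 2))) *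
          (if Even n then c + (n - 2) / 2 else a + (n - 1) / 2) := by
  rw [sum_choose_mul_ascPochhammer]
  obtain ⟨m, rfl | rfl⟩ := n.even_or_odd'
  · rw [coeff_two_mul_kummerSeries_sub_one_mul_rescale hc, Nat.mul_div_cancel_left m two_pos,
      if_pos (even_two_mul m)]
    push_cast
    ring
  · rw [coeff_two_mul_add_one_kummerSeries_sub_one_mul_rescale hc,
      if_neg (Nat.not_even_two_mul_add_one m), show (2 * m + 1) / 2 = m by omega]
    push_cast
    ring

lemma poch_eq_ascPochhammer_eval (x : ℝ) (n : ℕ) : poch x n = ⦅x⦆_n := by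
  induction n with
  | zero => simp [poch]
  | succ n ih => rw [ascPochhammer_succ_eval, ← ih, poch, poch, Finset.prod_range_succ]

/-- Proposition 7: binomial convolution formula extracted from the variant
product formula for `₁F₁(a; c-1; x) · ₁F₁(a; c; -x)`. -/
theorem stmt_11 (n : ℕ) (a c : ℝ) (hc : poch (c - 1) (n + 1) ≠ 0) :
    ∑ k ∈ Finset.range (n + 1),
        (-1 : ℝ) ^ k * (n.choose k : ℝ) * (poch a k * poch a (n - k)) /
          (poch c k * poch (c - 1) (n - k))
      = ((n.factorial : ℝ) / poch (c - 1) (n + 1)) *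
          (poch a (n / 2) * poch (c - a) (n / 2) / (poch 1 (n / 2) * poch c (n / 2))) *
          (if Even n then c + ((n : ℝ) - 2) / 2 else a + ((n : ℝ) - 1) / 2) := by
  simp only [poch_eq_ascPochhammer_eval] at hc ⊢
  exact stmt_11_general n a c hc
end

section
/- For all natural numbers n and λ, ∑_{k=0}^{n} (−1)^k · binom(n,k) · (n−1)(n−3) · C_λ² / (C_{k+λ} · C_{n−k+λ}) equals 3 · χ(n even) · C_λ · binom(2λ, λ) · binom(n, ⌊n/2⌋) / (C_{λ+⌊n/2⌋} · binom(λ+n, λ) · binom(2λ+2n, λ+n)), as an equality of rational numbers. -/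
/-!
Put `u k = 4 ^ k / catalan (k + lam)`, so that `(c + k) u (k + 1) = (b + k) u k` with `b = lam + 2`
and `c = lam + 1/2`. For every hypergeometric sequence of this kind the alternating sum
`S n u = ∑ (-1) ^ i binom(n, i) u i u (n - i)` is a terminating well-poised `₃F₂(1)`, evaluated by
Dixon's theorem. For odd `n` the reflection `i ↦ n - i` gives `S n u = 0`. For even `n + 2`,
absorbing a factor `i` into the binomial coefficient and applying the recurrence turns
`∑ (-1) ^ i binom(n + 2, i) i (c + i - 1) u i (b + j) u j` into an alternating sum of odd order
`n + 1`, which vanishes; symmetrising its weight in `i` and `j` relates `S (n + 2) u` to `S n` of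
the shifted sequence. Here `c - b = -3/2`, and the Pochhammer symbol of `-3/2` produces the factor
`3 / ((n - 1) (n - 3))`.
-/

section AltBinomConv

open Finset

theorem ascPochhammer_succ_left_eval {S : Type*} [CommSemiring S] (n : ℕ) (x : S) :
    (ascPochhammer S (n + 1)).eval x = x * (ascPochhammer S n).eval (x + 1) := by
  simp [ascPochhammer_succ_left, Polynomial.eval_comp]

/-- The alternating binomial convolution `∑_{i + j = n} (-1)^i binom(n, i) u_i v_j` of two
sequences: `n!` times the coefficient of `t^n` in `U(-t) V(t)`, where `U` and `V` are their
exponential generating functions. -/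
def altBinomConv {R : Type*} [CommRing R] (n : ℕ) (u v : ℕ → R) : R :=
  ∑ p ∈ antidiagonal n, (-1) ^ p.1 * (n.choose p.1 : R) * (u p.1 * v p.2)

section CommRing

variable {R : Type*} [CommRing R]

theorem altBinomConv_swap (n : ℕ) (u v : ℕ → R) :
    altBinomConv n v u = (-1) ^ n * altBinomConv n u v := by
  rw [altBinomConv, ← Nat.sum_antidiagonal_swap, altBinomConv, mul_sum]
  refine sum_congr rfl fun ⟨i, j⟩ hij ↦ ?_
  obtain rfl : i + j = n := by simpa using hij
  have hsign : (-1 : R) ^ (i + j) * (-1) ^ i = (-1) ^ j := by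
    simp [pow_add, mul_right_comm, ← mul_pow]
  simp only [Prod.swap]
  rw [← hsign, Nat.choose_symm_add]
  ring

theorem altBinomConv_succ_cast_mul_left (n : ℕ) (u v : ℕ → R) :
    altBinomConv (n + 1) (fun i ↦ i * u i) v
      = -((n + 1) * altBinomConv n (fun i ↦ u (i + 1)) v) := by
  rw [altBinomConv, Nat.sum_antidiagonal_succ, altBinomConv, mul_sum, ← sum_neg_distrib]
  simp only [Nat.cast_zero, zero_mul, mul_zero, zero_add]
  refine sum_congr rfl fun ⟨i, j⟩ _ ↦ ?_
  have habsorb : ((n : R) + 1) * n.choose i = (n + 1).choose (i + 1) * (i + 1) := by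
    exact_mod_cast congrArg ((↑) : ℕ → R) (Nat.add_one_mul_choose_eq n i)
  push_cast
  linear_combination (-1) ^ i * u (i + 1) * v j * habsorb

theorem altBinomConv_succ_cast_mul_right (n : ℕ) (u v : ℕ → R) :
    altBinomConv (n + 1) u (fun j ↦ j * v j)
      = (n + 1) * altBinomConv n u (fun j ↦ v (j + 1)) := by
  rw [altBinomConv_swap, altBinomConv_succ_cast_mul_left, altBinomConv_swap n u]
  have hsign : (-1 : R) ^ n * (-1) ^ n = 1 := by simp [← mul_pow]
  linear_combination (n + 1) * altBinomConv n u (fun j ↦ v (j + 1)) * hsign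

end CommRing

section Domain

variable {R : Type*} [CommRing R] [IsDomain R] [CharZero R]

theorem altBinomConv_self_of_odd {n : ℕ} (hn : Odd n) (u : ℕ → R) : altBinomConv n u u = 0 := by
  have hneg := altBinomConv_swap n u u
  rwa [hn.neg_one_pow, neg_one_mul, self_eq_neg] at hneg

variable {b c : R} {u : ℕ → R}

theorem altBinomConv_succ_eq_zero_of_recurrence (hu : ∀ k : ℕ, (c + k) * u (k + 1) = (b + k) * u k)
    {n : ℕ} (hn : Odd n) :
    altBinomConv (n + 1) (fun i ↦ i * ((c + i - 1) * u i)) (fun j ↦ (b + j) * u j) = 0 := by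
  have hshift : (fun i : ℕ ↦ (c + (i + 1 : ℕ) - 1) * u (i + 1)) = fun i ↦ (b + i) * u i := by
    funext i
    rw [← hu]
    push_cast
    ring
  rw [altBinomConv_succ_cast_mul_left, hshift, altBinomConv_self_of_odd hn, mul_zero, neg_zero]

theorem altBinomConv_self_add_two (hu : ∀ k : ℕ, (c + k) * u (k + 1) = (b + k) * u k)
    {n : ℕ} (hn : Even n) :
    b * (c + n + 1) * altBinomConv (n + 2) u u
      = (n + 1) * (2 * (c - b) + n) *
          altBinomConv n (fun k ↦ u (k + 1)) (fun k ↦ u (k + 1)) := by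
  have hleft := altBinomConv_succ_eq_zero_of_recurrence hu hn.add_one
  have hright : altBinomConv (n + 2) (fun j ↦ (b + j) * u j)
      (fun i ↦ i * ((c + i - 1) * u i)) = 0 := by
    rw [altBinomConv_swap, hleft, mul_zero]
  have hshift : altBinomConv (n + 2) (fun i ↦ i * u i) (fun j ↦ j * u j)
      = -((n + 2) * (n + 1) * altBinomConv n (fun k ↦ u (k + 1)) (fun k ↦ u (k + 1))) := by
    rw [altBinomConv_succ_cast_mul_left, altBinomConv_succ_cast_mul_right]
    push_cast
    ring
  -- `i (c + i - 1) (b + j) + j (c + j - 1) (b + i)` depends only on `i + j` and `i j`.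
  have hsymm : altBinomConv (n + 2) (fun i ↦ i * ((c + i - 1) * u i)) (fun j ↦ (b + j) * u j)
        + altBinomConv (n + 2) (fun j ↦ (b + j) * u j) (fun i ↦ i * ((c + i - 1) * u i))
      = b * (n + 2) * (c + n + 1) * altBinomConv (n + 2) u u
        + (2 * (c - b) + n) * altBinomConv (n + 2) (fun i ↦ i * u i) (fun j ↦ j * u j) := by
    simp only [altBinomConv, mul_sum, ← sum_add_distrib]
    refine sum_congr rfl fun ⟨i, j⟩ hij ↦ ?_
    have hcast : (n : R) = i + j - 2 := by
      rw [eq_sub_iff_add_eq]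
      exact_mod_cast (mem_antidiagonal.mp hij).symm
    rw [hcast]
    ring
  rw [hleft, hright, hshift] at hsymm
  have hn2 : (n : R) + 2 ≠ 0 := by exact_mod_cast (n + 1).succ_ne_zero
  apply mul_left_cancel₀ hn2
  linear_combination -hsymm

/-- A terminating case of Dixon's theorem for well-poised `₃F₂(1)`. -/
theorem altBinomConv_self_two_mul (m : ℕ) (hb : ∀ k : ℕ, b + k ≠ 0)
    (hu : ∀ k : ℕ, (c + k) * u (k + 1) = (b + k) * u k) :
    (ascPochhammer R (2 * m)).eval c * m.factorial * altBinomConv (2 * m) u u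
      = (2 * m).factorial * (ascPochhammer R m).eval (c - b) * (u 0 * u m) := by
  induction m generalizing b c u with
  | zero => simp [altBinomConv]
  | succ m ih =>
    have hb0 : b ≠ 0 := by simpa using hb 0
    have hu0 : c * u 1 = b * u 0 := by simpa using hu 0
    have hrec := altBinomConv_self_add_two hu (even_two_mul m)
    have hih := @ih (b + 1) (c + 1) (fun k ↦ u (k + 1))
      (fun k ↦ by simpa [add_assoc, add_comm (1 : R)] using hb (k + 1))
      (fun k ↦ by simpa [add_assoc, add_comm (1 : R)] using hu (k + 1))
    rw [add_sub_add_right_eq_sub, zero_add] at hih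
    rw [mul_add_one, ascPochhammer_succ_eval, ascPochhammer_succ_left_eval, ascPochhammer_succ_eval,
      Nat.factorial_succ, Nat.factorial_succ, Nat.factorial_succ]
    push_cast at hrec ⊢
    apply mul_left_cancel₀ hb0
    linear_combination
      c * (ascPochhammer R (2 * m)).eval (c + 1) * (m + 1) * m.factorial * hrec
        + 2 * (m + 1) * (2 * m + 1) * (c - b + m) * c * hih
        + 2 * (m + 1) * (2 * m + 1) * (c - b + m) * (2 * m).factorial
          * (ascPochhammer R m).eval (c - b) * u (m + 1) * hu0

end Domain

end AltBinomConv

section Catalan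

theorem catalan_ne_zero (n : ℕ) : catalan n ≠ 0 := fun h ↦
  n.centralBinom_ne_zero (by rw [← succ_mul_catalan_eq_centralBinom, h, mul_zero])

theorem add_two_mul_catalan_succ (n : ℕ) :
    (n + 2) * catalan (n + 1) = 2 * (2 * n + 1) * catalan n := by
  have h := Nat.succ_mul_centralBinom_succ n
  rw [← succ_mul_catalan_eq_centralBinom, ← succ_mul_catalan_eq_centralBinom] at h
  apply Nat.eq_of_mul_eq_mul_left n.succ_pos
  linarith

variable {K : Type*} [Field K]

theorem altBinomConv_four_pow_div_catalan (n l : ℕ) :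
    altBinomConv n (fun k ↦ 4 ^ k / (catalan (k + l) : K)) (fun k ↦ 4 ^ k / (catalan (k + l) : K))
      = 4 ^ n * ∑ k ∈ Finset.range (n + 1),
          (-1) ^ k * (n.choose k : K) / (catalan (k + l) * catalan (n - k + l)) := by
  rw [altBinomConv, Finset.Nat.sum_antidiagonal_eq_sum_range_succ_mk, Finset.mul_sum]
  refine Finset.sum_congr rfl fun k hk ↦ ?_
  have hkn : k ≤ n := Nat.lt_succ_iff.mp (Finset.mem_range.mp hk)
  rw [← Nat.add_sub_of_le hkn, pow_add, Nat.add_sub_cancel_left]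
  ring

variable [CharZero K]

theorem four_pow_div_catalan_recurrence (l k : ℕ) :
    ((l : K) + 1 / 2 + k) * (4 ^ (k + 1) / catalan (k + 1 + l))
      = (l + 2 + k) * (4 ^ k / catalan (k + l)) := by
  have hne (i : ℕ) : (catalan i : K) ≠ 0 := by exact_mod_cast catalan_ne_zero i
  have hcatalan : (((k + l : ℕ) : K) + 2) * catalan (k + 1 + l)
      = 2 * (2 * (k + l : ℕ) + 1) * catalan (k + l) := by
    rw [add_right_comm]
    exact_mod_cast add_two_mul_catalan_succ (k + l)
  rw [mul_div_assoc', mul_div_assoc', div_eq_div_iff (hne _) (hne _)]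
  push_cast at hcatalan
  linear_combination -4 ^ k * hcatalan

theorem centralBinom_add_mul_choose_mul_factorial (l n : ℕ) :
    ((l + n).centralBinom : K) * (l + n).choose l * n.factorial
      = 4 ^ n * (ascPochhammer K n).eval ((l : K) + 1 / 2) * l.centralBinom := by
  induction n with
  | zero => simp
  | succ n ih =>
    have hcentral : ((l : K) + n + 1) * (l + n + 1).centralBinom
        = 2 * (2 * (l + n) + 1) * (l + n).centralBinom := by
      exact_mod_cast Nat.succ_mul_centralBinom_succ (l + n)
    have hchoose : ((l + n).choose l : K) * (l + n + 1) = (l + n + 1).choose l * (n + 1) := by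
      have h := Nat.choose_mul_succ_eq (l + n) l
      rw [show l + n + 1 - l = n + 1 by omega] at h
      exact_mod_cast h
    rw [← add_assoc, ascPochhammer_succ_eval, Nat.factorial_succ]
    push_cast
    linear_combination
      -((l + n + 1).centralBinom : K) * n.factorial * hchoose
        + (l + n).choose l * n.factorial * hcentral + 2 * (2 * (l + n) + 1) * ih

theorem ascPochhammer_eval_neg_three_halves (m : ℕ) :
    (2 * (m : K) - 1) * (2 * m - 3) * (4 ^ m * (ascPochhammer K m).eval (-3 / 2))
      = 3 * m.centralBinom * m.factorial := by
  induction m with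
  | zero => simp
  | succ m ih =>
    have hcentral : ((m : K) + 1) * (m + 1).centralBinom = 2 * (2 * m + 1) * m.centralBinom := by
      exact_mod_cast Nat.succ_mul_centralBinom_succ m
    rw [ascPochhammer_succ_eval, Nat.factorial_succ]
    push_cast
    linear_combination 2 * (2 * m + 1) * ih - 3 * m.factorial * hcentral

theorem sum_neg_one_pow_choose_div_catalan_of_odd {n : ℕ} (hn : Odd n) (l : ℕ) :
    ∑ k ∈ Finset.range (n + 1),
      (-1) ^ k * (n.choose k : K) / (catalan (k + l) * catalan (n - k + l)) = 0 := by
  have h := altBinomConv_four_pow_div_catalan (K := K) n l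
  rw [altBinomConv_self_of_odd hn, eq_comm, mul_eq_zero] at h
  exact h.resolve_left (pow_ne_zero n (by norm_num))

theorem sum_neg_one_pow_choose_div_catalan_two_mul (m l : ℕ) :
    (2 * (m : K) - 1) * (2 * m - 3) * catalan l * catalan (l + m) *
        (l + 2 * m).choose l * (l + 2 * m).centralBinom *
        ∑ k ∈ Finset.range (2 * m + 1),
          (-1) ^ k * ((2 * m).choose k : K) / (catalan (k + l) * catalan (2 * m - k + l))
      = 3 * l.centralBinom * m.centralBinom := by
  have hne (i : ℕ) : (catalan i : K) ≠ 0 := by exact_mod_cast catalan_ne_zero i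
  have hfact (i : ℕ) : (i.factorial : K) ≠ 0 := by exact_mod_cast i.factorial_ne_zero
  have hb (k : ℕ) : (l : K) + 2 + k ≠ 0 := by exact_mod_cast (by omega : l + 2 + k ≠ 0)
  have hdixon := altBinomConv_self_two_mul (u := fun k ↦ 4 ^ k / (catalan (k + l) : K)) m hb
    (four_pow_div_catalan_recurrence l)
  rw [altBinomConv_four_pow_div_catalan, show (l : K) + 1 / 2 - (l + 2) = -3 / 2 by ring, pow_zero,
    zero_add, add_comm m l, div_mul_div_comm, one_mul, mul_div_assoc',
    eq_div_iff (mul_ne_zero (hne l) (hne (l + m)))] at hdixon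
  have hcentral := centralBinom_add_mul_choose_mul_factorial (K := K) l (2 * m)
  have hhalves := ascPochhammer_eval_neg_three_halves (K := K) m
  apply mul_left_cancel₀ (mul_ne_zero (hfact (2 * m)) (hfact m))
  set S := ∑ k ∈ Finset.range (2 * m + 1),
    (-1) ^ k * ((2 * m).choose k : K) / (catalan (k + l) * catalan (2 * m - k + l))
  linear_combination
    (2 * (m : K) - 1) * (2 * m - 3) * catalan l * catalan (l + m) * m.factorial * S * hcentral
      + (2 * (m : K) - 1) * (2 * m - 3) * l.centralBinom * hdixon
      + (2 * m).factorial * l.centralBinom * hhalves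

end Catalan

/-- Corollary 8: reciprocal formula of Theorem A. -/
theorem stmt_12 (n lam : ℕ) :
    ∑ k ∈ Finset.range (n + 1),
        (-1 : ℚ) ^ k * (n.choose k : ℚ) *
          (((n : ℚ) - 1) * ((n : ℚ) - 3) * (catalan lam : ℚ) ^ 2) /
          ((catalan (k + lam) : ℚ) * (catalan (n - k + lam) : ℚ))
      = 3 * (if Even n then 1 else 0) * (catalan lam : ℚ) * ((2 * lam).choose lam : ℚ)
          * (n.choose (n / 2) : ℚ) /
          ((catalan (lam + n / 2) : ℚ) * ((lam + n).choose lam : ℚ)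
            * ((2 * lam + 2 * n).choose (lam + n) : ℚ)) := by
  rw [Finset.sum_congr rfl fun k _ ↦ mul_div_right_comm _ _ _, ← Finset.sum_mul]
  obtain hn | hn := n.even_or_odd
  · obtain ⟨m, rfl⟩ := hn.two_dvd
    have hden : (catalan (lam + m) : ℚ) * (lam + 2 * m).choose lam * (lam + 2 * m).centralBinom
        ≠ 0 := by
      have hchoose := (Nat.choose_pos (Nat.le_add_right lam (2 * m))).ne'
      exact_mod_cast mul_ne_zero (mul_ne_zero (catalan_ne_zero _) hchoose)
        (Nat.centralBinom_ne_zero _)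
    rw [if_pos hn, Nat.mul_div_cancel_left m two_pos, ← Nat.mul_add,
      ← Nat.centralBinom_eq_two_mul_choose, ← Nat.centralBinom_eq_two_mul_choose,
      ← Nat.centralBinom_eq_two_mul_choose, eq_div_iff hden]
    push_cast
    linear_combination catalan lam * sum_neg_one_pow_choose_div_catalan_two_mul (K := ℚ) m lam
  · rw [sum_neg_one_pow_choose_div_catalan_of_odd hn, if_neg (Nat.not_even_iff_odd.2 hn)]
    simp
end
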